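/- arXiv:1805.03488 — 4 statements merged into one kernel-verified Lean document; each statement's English description precedes it below -/
import Mathlib

section
/- Let r ≥ 1 and d ≥ 1 be integers and let G be a finite simple graph such that every depth-(r−1) topological minor of G has edge density at most d. Then wcol_r(G) ≤ ((6r²d³)^{r+1} − 1)/(6r²d³ − 1), i.e., G has a vertex ordering σ with wcol_r(G,σ) ≤ ((6r²d³)^{r+1} − 1)/(6r²d³ − 1). -/
/-- `BConnGE G S u r m` holds if there is a family of `m` paths in `G`, each of length at
most `r`, starting in `u`, ending in a vertex of `S` different from `u`, with all internal
vertices outside `S`, and pairwise sharing only the vertex `u`. -/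
def BConnGE {V : Type} (G : SimpleGraph V) (S : Set V) (u : V) (r m : ℕ) : Prop :=
  ∃ (t : Fin m → V) (P : ∀ i, G.Walk u (t i)),
    (∀ i, (P i).IsPath) ∧
    (∀ i, (P i).length ≤ r) ∧
    (∀ i, t i ∈ S ∧ t i ≠ u) ∧
    (∀ i, ∀ w ∈ (P i).support, w ≠ u → w ≠ t i → w ∉ S) ∧
    (∀ i j, i ≠ j → ∀ w ∈ (P i).support, w ∈ (P j).support → w = u)

/-- The back-connectivity `bconn_r(S,u)`: the maximum cardinality of a family of paths as in
`BConnGE`. -/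
noncomputable def bconn {V : Type} (G : SimpleGraph V) (S : Set V) (u : V) (r : ℕ) : ℕ :=
  sSup {m : ℕ | BConnGE G S u r m}

/-- `G` admits a depth-`r` topological minor `H` (witnessed by a topological minor model:
branch vertices `f` and internally disjoint paths of length at most `2r+1` for the edges
of `H`, internally avoiding all branch vertices) whose edge density `|E(H)|/|V(H)|`
is strictly larger than `d`. -/
def HasDepthTopMinorDensityGT {V : Type} (G : SimpleGraph V) (r : ℕ) (d : ℝ) : Prop :=
  ∃ (m : ℕ) (H : SimpleGraph (Fin m)),
    0 < m ∧
    d < (H.edgeSet.ncard : ℝ) / (m : ℝ) ∧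
    ∃ (f : Fin m → V) (P : ∀ (a b : Fin m), a < b → H.Adj a b → G.Walk (f a) (f b)),
      Function.Injective f ∧
      (∀ (a b : Fin m) (hab : a < b) (h : H.Adj a b), (P a b hab h).IsPath) ∧
      (∀ (a b : Fin m) (hab : a < b) (h : H.Adj a b), (P a b hab h).length ≤ 2 * r + 1) ∧
      (∀ (a b : Fin m) (hab : a < b) (h : H.Adj a b),
        ∀ w ∈ (P a b hab h).support, w ≠ f a → w ≠ f b → ∀ c : Fin m, w ≠ f c) ∧
      (∀ (a b : Fin m) (hab : a < b) (h : H.Adj a b)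
         (a' b' : Fin m) (hab' : a' < b') (h' : H.Adj a' b'), (a, b) ≠ (a', b') →
        ∀ w ∈ (P a b hab h).support, w ∈ (P a' b' hab' h').support → w = f a ∨ w = f b)

/-- `WReach G σ r v` is the set of vertices weakly `r`-reachable from `v` in the vertex
ordering `σ`: those `u` with `σ u ≤ σ v` admitting a path of length at most `r` from `v`
to `u` all of whose internal vertices are larger than `u` in `σ`. -/
def WReach {V : Type} (G : SimpleGraph V) (σ : V → ℕ) (r : ℕ) (v : V) : Set V :=
  {u | σ u ≤ σ v ∧ ∃ p : G.Walk v u, p.IsPath ∧ p.length ≤ r ∧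
        ∀ w ∈ p.support, w ≠ v → w ≠ u → σ u < σ w}

/-- The weak `r`-coloring number `wcol_r(G,σ)` of a vertex ordering `σ`:
the maximum over vertices `v` of `|WReach_r[G,σ,v]|`. -/
noncomputable def wcolOrd {V : Type} [Fintype V] (G : SimpleGraph V) (σ : V → ℕ) (r : ℕ) : ℕ :=
  Finset.univ.sup fun v => (WReach G σ r v).ncard

/-!
Every nonempty set `S` of vertices contains a vertex that is not the centre of a large fan, i.e. of
many paths of length at most `r` to `S` that are disjoint apart from their start. To see this, link
pairs of vertices of `S` by short internally disjoint paths until no further pair can be linked.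
The resulting minor is sparse, so Turán's theorem gives a large independent set `R` in it. If every
vertex of `S` were the centre of a large fan, the fans centred at `R`, cut off at the vertices of
the model, would be internally disjoint by saturation, and hence form the edges of a second minor,
which is too dense.

Placing such a vertex last and recursing on the rest gives an ordering in which every vertex `v` has
only small fans to the vertices up to `v`. The vertices of a maximal fan separate `v` from these, so
that `WReach (n + 1) v` is contained in `{v}` together with `WReach n y` for few vertices `y`. Hence
the sizes of these sets are bounded by the partial sums of a geometric series.
-/

open SimpleGraph

section IndependentSets

theorem mul_card_edgeFinset_le_of_cliqueFree {α : Type*} [Fintype α] {H : SimpleGraph α}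
    [DecidableRel H.Adj] {k : ℕ} (hk : 0 < k) (hH : H.CliqueFree (k + 1)) :
    2 * k * H.edgeFinset.card ≤ (k - 1) * Fintype.card α ^ 2 := by
  obtain ⟨T, _, hT⟩ := exists_isTuranMaximal (V := α) hk
  obtain ⟨e⟩ := hT.nonempty_iso_turanGraph
  calc 2 * k * H.edgeFinset.card
      ≤ 2 * k * T.edgeFinset.card := Nat.mul_le_mul_left _ (hT.2 hH)
    _ = 2 * k * (turanGraph (Fintype.card α) k).edgeFinset.card := by rw [e.card_edgeFinset_eq]
    _ ≤ (k - 1) * Fintype.card α ^ 2 := mul_card_edgeFinset_turanGraph_le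

theorem card_edgeFinset_add_card_edgeFinset_compl {α : Type*} [Fintype α] [DecidableEq α]
    (H : SimpleGraph α) [DecidableRel H.Adj] :
    H.edgeFinset.card + Hᶜ.edgeFinset.card = (Fintype.card α).choose 2 := by
  rw [← Finset.card_union_of_disjoint (disjoint_edgeFinset.mpr disjoint_compl_right),
    ← edgeFinset_sup, ← card_edgeFinset_top_eq_card_choose_two]
  congr!
  exact sup_compl_eq_top

theorem card_sq_le_indepNum_mul {α : Type*} [Finite α] (H : SimpleGraph α) :
    Nat.card α ^ 2 ≤ H.indepNum * (Nat.card α + 2 * H.edgeSet.ncard) := by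
  classical
  have := Fintype.ofFinite α
  rw [Nat.card_eq_fintype_card, ← coe_edgeFinset, Set.ncard_coe_finset]
  have hfree : Hᶜ.CliqueFree (H.indepNum + 1) := fun t ht => by
    rw [isNClique_compl] at ht
    exact (ht.isIndepSet.card_le_indepNum.trans_lt (Nat.lt_succ_self _)).ne ht.card_eq
  obtain hzero | hpos := H.indepNum.eq_zero_or_pos
  · have : IsEmpty α := by simpa [hzero] using hfree
    simp
  have hcompl := mul_card_edgeFinset_le_of_cliqueFree hpos hfree
  have hpairs : 2 * (H.edgeFinset.card + Hᶜ.edgeFinset.card) + Fintype.card α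
      = Fintype.card α ^ 2 := by
    rw [card_edgeFinset_add_card_edgeFinset_compl, Nat.choose_two_right,
      Nat.mul_div_cancel' (Nat.even_mul_pred_self _).two_dvd]
    obtain _ | n := Fintype.card α
    · rfl
    · rw [Nat.add_sub_cancel]
      ring
  obtain ⟨k, hk⟩ := Nat.exists_eq_succ_of_ne_zero hpos.ne'
  rw [hk, Nat.succ_sub_one] at hcompl
  rw [hk]
  nlinarith

end IndependentSets

section Walks

variable {V : Type*} {G : SimpleGraph V} {a b : V}

theorem exists_isPath_first_mem (p : G.Walk a b) {B : Set V} (hb : b ∈ B) :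
    ∃ c ∈ B, ∃ q : G.Walk a c, q.IsPath ∧ q.length ≤ p.length ∧ q.support ⊆ p.support ∧
      ∀ w ∈ q.support, w ∈ B → w = c := by
  classical
  obtain ⟨c, hcB, hc, hfirst⟩ := p.bypass.exists_mem_support_forall_mem_support_imp_eq
    {x ∈ p.bypass.support.toFinset | x ∈ B} ⟨b, by simpa using hb⟩
  have hsub := p.bypass.support_takeUntil_subset_support hc
  exact ⟨c, (Finset.mem_filter.mp hcB).2, p.bypass.takeUntil c hc, p.bypass_isPath.takeUntil hc,
    (p.bypass.length_takeUntil_le_length hc).trans p.length_bypass_le_length,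
    fun w hw => p.support_bypass_subset_support (hsub hw),
    fun w hw hwB => hfirst w (by simpa using ⟨hsub hw, hwB⟩) hw⟩

theorem exists_walk_of_mem_support {a' b' w : V} {p : G.Walk a b} {q : G.Walk a' b'}
    (hp : p.IsPath) (hq : q.IsPath) (hwp : w ∈ p.support) (hwq : w ∈ q.support) (hwb : w ≠ b)
    (hwb' : w ≠ b') :
    ∃ s : G.Walk a a', s.length + 2 ≤ p.length + q.length ∧
      ∀ x ∈ s.support, x ∈ p.support ∧ x ≠ b ∨ x ∈ q.support ∧ x ≠ b' := by
  classical
  refine ⟨(p.takeUntil w hwp).append (q.takeUntil w hwq).reverse, ?_, fun x hx => ?_⟩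
  · have := Walk.length_takeUntil_lt_length hwp hwb
    have := Walk.length_takeUntil_lt_length hwq hwb'
    rw [Walk.length_append, Walk.length_reverse]
    omega
  · rw [Walk.mem_support_append_iff, Walk.support_reverse, List.mem_reverse] at hx
    refine hx.imp (fun h => ⟨p.support_takeUntil_subset_support hwp h, ?_⟩)
      (fun h => ⟨q.support_takeUntil_subset_support hwq h, ?_⟩) <;> rintro rfl
    · exact Walk.endpoint_notMem_support_takeUntil hp hwp hwb.symm h
    · exact Walk.endpoint_notMem_support_takeUntil hq hwq hwb'.symm h

end Walks

/-- A family, indexed by `ι`, of walks of length at most `n` in `G` that join distinct vertices of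
`S`, meet `S` only in their ends and meet each other only inside `S`, no two of them having the
same pair of ends. Up to shortening the walks to paths, this is a model in `G` of a topological
minor with branch vertices `S` and edges `ι`. -/
structure Linkage {V : Type*} (G : SimpleGraph V) (S : Set V) (n : ℕ) (ι : Type*) where
  src : ι → S
  tgt : ι → S
  walk : ∀ i, G.Walk (src i : V) (tgt i)
  src_ne_tgt : ∀ i, src i ≠ tgt i
  ends_injective : Function.Injective fun i => s(src i, tgt i)
  length_le : ∀ i, (walk i).length ≤ n
  eq_of_mem_support : ∀ i, ∀ w ∈ (walk i).support, w ∈ S → w = src i ∨ w = tgt i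
  mem_of_mem_support : ∀ i j, i ≠ j → ∀ w ∈ (walk i).support, w ∈ (walk j).support → w ∈ S

namespace Linkage

variable {V : Type*} {G : SimpleGraph V} {S : Set V} {n : ℕ} {ι : Type*}

/-- The topological minor modelled by a linkage. -/
def graph (L : Linkage G S n ι) : SimpleGraph S :=
  fromEdgeSet (Set.range fun i => s(L.src i, L.tgt i))

/-- The set of all vertices of the model: the branch vertices together with the vertices of the
linking walks. -/
def verts (L : Linkage G S n ι) : Set V :=
  S ∪ ⋃ i, {w | w ∈ (L.walk i).support}

theorem subset_verts (L : Linkage G S n ι) : S ⊆ L.verts :=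
  Set.subset_union_left

theorem support_subset_verts (L : Linkage G S n ι) {i : ι} {w : V}
    (hw : w ∈ (L.walk i).support) : w ∈ L.verts :=
  Or.inr (Set.mem_iUnion.mpr ⟨i, hw⟩)

theorem ncard_edgeSet_graph (L : Linkage G S n ι) : L.graph.edgeSet.ncard = Nat.card ι := by
  have hdiag : Disjoint (Set.range fun i => s(L.src i, L.tgt i)) Sym2.diagSet := by
    rw [Set.disjoint_left]
    rintro _ ⟨i, rfl⟩
    simpa using L.src_ne_tgt i
  rw [graph, edgeSet_fromEdgeSet, hdiag.sdiff_eq_left,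
    Set.ncard_range_of_injective L.ends_injective]

theorem ncard_verts_le [Finite S] [Finite ι] (L : Linkage G S n ι) :
    L.verts.ncard ≤ S.ncard + n * Nat.card ι := by
  classical
  have := Fintype.ofFinite ι
  have hverts : L.verts ⊆ S ∪ ⋃ i, ((L.walk i).support.tail.toFinset : Set V) := by
    rintro w (hw | hw)
    · exact Or.inl hw
    · obtain ⟨i, hi⟩ := Set.mem_iUnion.mp hw
      obtain rfl | hi := (L.walk i).mem_support_iff.mp hi
      · exact Or.inl (L.src i).2
      · exact Or.inr (Set.mem_iUnion.mpr ⟨i, by simpa using hi⟩)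
  have hfinite : (S ∪ ⋃ i, ((L.walk i).support.tail.toFinset : Set V)).Finite :=
    S.toFinite.union (Set.finite_iUnion fun i => Finset.finite_toSet _)
  have htail (i : ι) : ((L.walk i).support.tail.toFinset : Set V).ncard ≤ n := by
    rw [Set.ncard_coe_finset]
    refine (List.toFinset_card_le _).trans ?_
    simpa using L.length_le i
  calc L.verts.ncard
      ≤ S.ncard + (⋃ i, ((L.walk i).support.tail.toFinset : Set V)).ncard :=
        (Set.ncard_le_ncard hverts hfinite).trans (Set.ncard_union_le _ _)
    _ ≤ S.ncard + ∑ i, ((L.walk i).support.tail.toFinset : Set V).ncard :=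
        Nat.add_le_add_left (Set.ncard_iUnion_le_of_fintype _) _
    _ ≤ S.ncard + n * Nat.card ι := by
        rw [mul_comm, Nat.card_eq_fintype_card]
        exact Nat.add_le_add_left (Finset.sum_le_card_nsmul _ _ _ fun i _ => htail i) _

theorem exists_isPath_of_graph_adj (L : Linkage G S n ι) {x y : S} (h : L.graph.Adj x y) :
    ∃ i, s(L.src i, L.tgt i) = s(x, y) ∧ ∃ p : G.Walk (x : V) y,
      p.IsPath ∧ p.length ≤ n ∧ p.support ⊆ (L.walk i).support := by
  classical
  obtain ⟨⟨i, hi⟩, -⟩ := h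
  refine ⟨i, hi, ?_⟩
  obtain ⟨p, hlength, hsupport⟩ : ∃ p : G.Walk (x : V) y,
      p.length ≤ n ∧ p.support ⊆ (L.walk i).support := by
    obtain ⟨rfl, rfl⟩ | ⟨rfl, rfl⟩ := Sym2.eq_iff.mp hi
    · exact ⟨L.walk i, L.length_le i, fun w hw => hw⟩
    · exact ⟨(L.walk i).reverse, by simpa using L.length_le i, by simp⟩
  exact ⟨p.bypass, p.bypass_isPath, p.length_bypass_le_length.trans hlength,
    fun w hw => hsupport (p.support_bypass_subset_support hw)⟩

/-- A linkage is saturated if it cannot be extended: every short walk between non-adjacent branch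
vertices meets the model outside its ends. -/
def IsSaturated (L : Linkage G S n ι) : Prop :=
  ∀ x y : S, x ≠ y → ¬ L.graph.Adj x y → ∀ p : G.Walk (x : V) y, p.length ≤ n →
    ∃ w ∈ p.support, w ∈ L.verts ∧ w ≠ x ∧ w ≠ y

theorem IsSaturated.eq_of_isIndepSet {L : Linkage G S n ι} (hL : L.IsSaturated) {R : Set S}
    (hR : L.graph.IsIndepSet R) {x y : S} (hx : x ∈ R) (hy : y ∈ R) (p : G.Walk (x : V) y)
    (hp : p.length ≤ n) (hverts : ∀ w ∈ p.support, w ∈ L.verts → w = x ∨ w = y) : x = y := by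
  by_contra hxy
  obtain ⟨w, hw, hwL, hwx, hwy⟩ := hL x y hxy (hR hx hy hxy) p hp
  exact (hverts w hw hwL).elim hwx hwy

/-- The initial segments of `p` and `q` up to `w` compose to a walk violating saturation. -/
theorem IsSaturated.eq_of_mem_support_of_notMem_verts {L : Linkage G S n ι} (hL : L.IsSaturated)
    {R : Set S} (hR : L.graph.IsIndepSet R) {x y : S} (hx : x ∈ R) (hy : y ∈ R) {a b w : V}
    {p : G.Walk (x : V) a} {q : G.Walk (y : V) b} (hp : p.IsPath) (hq : q.IsPath)
    (hlength : p.length + q.length ≤ n + 2) (ha : a ∈ L.verts) (hb : b ∈ L.verts)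
    (hpverts : ∀ z ∈ p.support, z ∈ L.verts → z = x ∨ z = a)
    (hqverts : ∀ z ∈ q.support, z ∈ L.verts → z = y ∨ z = b)
    (hwp : w ∈ p.support) (hwq : w ∈ q.support) (hw : w ∉ L.verts) : x = y := by
  obtain ⟨s, hs, hsupport⟩ := exists_walk_of_mem_support hp hq hwp hwq
    (ne_of_mem_of_not_mem ha hw).symm (ne_of_mem_of_not_mem hb hw).symm
  refine hL.eq_of_isIndepSet hR hx hy s (by omega) fun z hz hzL => ?_
  exact (hsupport z hz).imp (fun h => (hpverts z h.1 hzL).resolve_right h.2)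
    (fun h => (hqverts z h.1 hzL).resolve_right h.2)

/-- The linkage with one more walk `p`, indexed by `none`. -/
def insert (L : Linkage G S n ι) {x y : S} (hxy : x ≠ y) (hadj : ¬ L.graph.Adj x y)
    (p : G.Walk (x : V) y) (hp : p.length ≤ n)
    (hverts : ∀ w ∈ p.support, w ∈ L.verts → w = x ∨ w = y) : Linkage G S n (Option ι) where
  src i := i.elim x L.src
  tgt i := i.elim y L.tgt
  walk
    | none => p
    | some i => L.walk i
  src_ne_tgt
    | none => hxy
    | some i => L.src_ne_tgt i
  ends_injective := by
    have hnew (i : ι) : s(L.src i, L.tgt i) ≠ s(x, y) := fun h => hadj ⟨⟨i, h⟩, hxy⟩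
    rintro (_ | i) (_ | j) h
    · rfl
    · exact absurd h.symm (hnew j)
    · exact absurd h (hnew i)
    · exact congrArg some (L.ends_injective h)
  length_le
    | none => hp
    | some i => L.length_le i
  eq_of_mem_support
    | none => fun w hw hwS => hverts w hw (L.subset_verts hwS)
    | some i => L.eq_of_mem_support i
  mem_of_mem_support := by
    have hnew (i : ι) (w : V) (hw : w ∈ p.support) (hwi : w ∈ (L.walk i).support) : w ∈ S := by
      obtain rfl | rfl := hverts w hw (L.support_subset_verts hwi)
      exacts [x.2, y.2]
    rintro (_ | i) (_ | j) hij w hwi hwj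
    · exact absurd rfl hij
    · exact hnew j w hwi hwj
    · exact hnew i w hwj hwi
    · exact L.mem_of_mem_support i j (fun h => hij (congrArg some h)) w hwi hwj

theorem exists_isSaturated (G : SimpleGraph V) (S : Set V) (n : ℕ) {K : ℕ}
    (hK : ∀ (ι : Type) [Finite ι], Linkage G S n ι → Nat.card ι ≤ K) :
    ∃ (ι : Type) (_ : Finite ι) (L : Linkage G S n ι), L.IsSaturated := by
  by_contra! hunsat
  have hall (m : ℕ) : ∃ (ι : Type) (_ : Finite ι), Nonempty (Linkage G S n ι) ∧ Nat.card ι = m := by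
    induction m with
    | zero =>
      exact ⟨Empty, inferInstance, ⟨nofun, nofun, nofun, nofun, nofun, nofun, nofun, nofun⟩,
        Nat.card_of_isEmpty⟩
    | succ m ih =>
      obtain ⟨ι, _, ⟨L⟩, hι⟩ := ih
      have hL := hunsat ι inferInstance L
      simp only [IsSaturated] at hL
      push Not at hL
      obtain ⟨x, y, hxy, hadj, p, hp, hverts⟩ := hL
      exact ⟨Option ι, inferInstance,
        ⟨L.insert hxy hadj p hp fun w hw hwL => or_iff_not_imp_left.mpr (hverts w hw hwL)⟩,
        by rw [Finite.card_option, hι]⟩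
  obtain ⟨ι, _, ⟨L⟩, hι⟩ := hall (K + 1)
  have := hK ι L
  omega

end Linkage

theorem Linkage.hasDepthTopMinorDensityGT {V : Type} {G : SimpleGraph V} {S : Set V} [Finite S]
    {k : ℕ} {ι : Type*} {d : ℝ} (L : Linkage G S (2 * k + 1) ι)
    (hd : d * S.ncard < Nat.card ι) : HasDepthTopMinorDensityGT G k d := by
  have hpos : 0 < S.ncard := by
    by_contra! hzero
    have hS : S = ∅ := (Set.ncard_eq_zero S.toFinite).mp (Nat.le_zero.mp hzero)
    have : IsEmpty S := Set.isEmpty_coe_sort.mpr hS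
    have := Function.isEmpty L.src
    simp [hS] at hd
  let e : S ≃ Fin S.ncard := Finite.equivFin S
  let H : SimpleGraph (Fin S.ncard) := L.graph.comap e.symm
  have hH : H.edgeSet.ncard = Nat.card ι := by
    rw [← L.ncard_edgeSet_graph]
    exact Nat.card_congr (Iso.comap e.symm L.graph).mapEdgeSet
  choose i hi P hpath hlength hsupport using
    fun a b (h : H.Adj a b) => L.exists_isPath_of_graph_adj h
  have hends (a b) (h : H.Adj a b) (w : V) (hw : w ∈ (P a b h).support) (hwS : w ∈ S) :
      w = e.symm a ∨ w = e.symm b := by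
    obtain ⟨ha, hb⟩ | ⟨ha, hb⟩ := Sym2.eq_iff.mp (hi a b h)
    · exact ha ▸ hb ▸ L.eq_of_mem_support (i a b h) w (hsupport a b h hw) hwS
    · exact ha ▸ hb ▸ (L.eq_of_mem_support (i a b h) w (hsupport a b h hw) hwS).symm
  refine ⟨S.ncard, H, hpos, ?_, fun a => e.symm a, fun a b _ h => P a b h,
    Subtype.val_injective.comp e.symm.injective, fun a b _ h => hpath a b h,
    fun a b _ h => hlength a b h, ?_, ?_⟩
  · rwa [hH, lt_div_iff₀ (by exact_mod_cast hpos)]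
  · intro a b _ h w hw hwa hwb c hc
    exact (hends a b h w hw (hc ▸ (e.symm c).2)).elim hwa hwb
  · rintro a b hab h a' b' hab' h' hne w hw hw'
    refine hends a b h w hw (L.mem_of_mem_support (i a b h) (i a' b' h') (fun hii => hne ?_) w
      (hsupport a b h hw) (hsupport a' b' h' hw'))
    have heq : s(e.symm a, e.symm b) = s(e.symm a', e.symm b') := by rw [← hi a b h, hii, hi]
    obtain ⟨ha, hb⟩ | ⟨ha, hb⟩ := Sym2.eq_iff.mp heq
    · exact Prod.ext (e.symm.injective ha) (e.symm.injective hb)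
    · exact absurd hab' (e.symm.injective ha ▸ e.symm.injective hb ▸ hab.not_gt)

theorem Linkage.natCard_le_of_not_hasDepthTopMinorDensityGT {V : Type} {G : SimpleGraph V}
    {S : Set V} [Finite S] {k d : ℕ} {ι : Type*} (hG : ¬ HasDepthTopMinorDensityGT G k d)
    (L : Linkage G S (2 * k + 1) ι) : Nat.card ι ≤ d * S.ncard := by
  by_contra! hlt
  exact hG (L.hasDepthTopMinorDensityGT (by exact_mod_cast hlt))

section BackConnectivity

variable {V : Type} {G : SimpleGraph V} {S B : Set V} {u : V} {s r m d : ℕ}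

theorem BConnGE.mono (hSB : S ⊆ B) (h : BConnGE G S u r m) : BConnGE G B u r m := by
  obtain ⟨t, P, -, hlength, ht, -, hdisj⟩ := h
  choose c hc Q hpath hle hsub hfirst using fun i =>
    exists_isPath_first_mem (P i) (B := B \ {u}) ⟨hSB (ht i).1, (ht i).2⟩
  exact ⟨c, Q, hpath, fun i => (hle i).trans (hlength i), hc,
    fun i w hw hwu hwc hwB => hwc (hfirst i w hw ⟨hwB, hwu⟩),
    fun i j hij w hwi hwj => hdisj i j hij w (hsub i hwi) (hsub j hwj)⟩

theorem Linkage.IsSaturated.nonempty_linkage_of_bConnGE {ι : Type*}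
    {L : Linkage G S (2 * s + 1) ι} (hL : L.IsSaturated) {R : Set S} (hR : L.graph.IsIndepSet R)
    (hfan : ∀ v ∈ R, BConnGE G L.verts v (s + 1) m) :
    Nonempty (Linkage G L.verts (2 * s + 1) (R × Fin m)) := by
  choose t P hpath hlength ht hinner hdisj using fun v : R => hfan v v.2
  have hends (v i w) (hw : w ∈ (P v i).support) (hwL : w ∈ L.verts) : w = v ∨ w = t v i := by
    by_contra! h
    exact hinner v i w hw h.1 h.2 hwL
  have htR (v : R) (i) (v' : R) : t v i ≠ v' := fun htv => by
    have hle := hlength v i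
    have hvv' : v.1 = v' := hL.eq_of_isIndepSet hR v.2 v'.2 ((P v i).copy rfl htv)
      (by rw [Walk.length_copy]; omega) (by simpa [← htv] using hends v i)
    exact (ht v i).2 (hvv' ▸ htv)
  have hfans (v i v' j w) (hw : w ∈ (P v i).support) (hw' : w ∈ (P v' j).support)
      (hwL : w ∉ L.verts) : v = v' := by
    have := hlength v i
    have := hlength v' j
    exact Subtype.ext (hL.eq_of_mem_support_of_notMem_verts hR v.2 v'.2 (hpath v i) (hpath v' j)
      (by omega) (ht v i).1 (ht v' j).1 (hends v i) (hends v' j) hw hw' hwL)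
  refine ⟨fun x => ⟨x.1, L.subset_verts x.1.1.2⟩, fun x => ⟨t x.1 x.2, (ht x.1 x.2).1⟩,
    fun x => P x.1 x.2, fun x h => (ht x.1 x.2).2 (congrArg Subtype.val h).symm, ?_,
    fun x => (hlength x.1 x.2).trans (by omega), fun x => hends x.1 x.2, ?_⟩
  · rintro ⟨v, i⟩ ⟨v', j⟩ h
    simp only [Sym2.eq_iff, Subtype.mk.injEq] at h
    obtain ⟨hv, hti⟩ | ⟨-, hti⟩ := h
    · obtain rfl : v = v' := Subtype.ext (Subtype.ext hv)
      by_contra hij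
      have hmem : t v i ∈ (P v j).support := by
        rw [hti]
        exact (P v j).end_mem_support
      exact (ht v i).2
        (hdisj v i j (fun h => hij (congrArg _ h)) _ (P v i).end_mem_support hmem)
    · exact absurd hti (htR v i v')
  · rintro ⟨v, i⟩ ⟨v', j⟩ hne w hw hw'
    by_contra hwL
    obtain rfl := hfans v i v' j w hw hw' hwL
    exact hwL (hdisj v i j (fun h => hne (congrArg _ h)) w hw hw' ▸ L.subset_verts v.1.2)

theorem le_of_forall_bConnGE [Finite V] (hd : 1 ≤ d) (hG : ¬ HasDepthTopMinorDensityGT G s d)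
    (hS : S.Nonempty) (hconn : ∀ u ∈ S, BConnGE G S u (s + 1) m) : m ≤ 6 * (s + 1) * d ^ 3 := by
  obtain ⟨ι, _, L, hL⟩ := Linkage.exists_isSaturated G S (2 * s + 1) fun _ _ L =>
    L.natCard_le_of_not_hasDepthTopMinorDensityGT hG
  have hedges := L.natCard_le_of_not_hasDepthTopMinorDensityGT hG
  obtain ⟨R, hR⟩ := L.graph.exists_isNIndepSet_indepNum
  obtain ⟨F⟩ := hL.nonempty_linkage_of_bConnGE hR.isIndepSet
    fun v _ => (hconn v v.2).mono L.subset_verts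
  have hfans : R.card * m ≤ d * L.verts.ncard := by
    simpa using F.natCard_le_of_not_hasDepthTopMinorDensityGT hG
  have hverts : L.verts.ncard ≤ 2 * (s + 1) * d * S.ncard := by
    have := L.ncard_verts_le
    nlinarith
  have hpos : 0 < S.ncard := (Set.ncard_pos S.toFinite).mpr hS
  have hindep : S.ncard ≤ 3 * d * R.card := by
    have hturan := card_sq_le_indepNum_mul L.graph
    rw [L.ncard_edgeSet_graph, Nat.card_coe_set_eq, ← hR.card_eq] at hturan
    refine le_of_mul_le_mul_right ?_ hpos
    calc S.ncard * S.ncard ≤ R.card * (S.ncard + 2 * Nat.card ι) := by rwa [← sq]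
      _ ≤ R.card * (3 * d * S.ncard) := by gcongr; nlinarith
      _ = 3 * d * R.card * S.ncard := by ring
  have hRpos : 0 < R.card := Nat.pos_of_mul_pos_left (hpos.trans_le hindep)
  refine le_of_mul_le_mul_left ?_ hRpos
  calc R.card * m ≤ d * (2 * (s + 1) * d * (3 * d * R.card)) := by
        exact hfans.trans (by gcongr; exact hverts.trans (by gcongr))
    _ = R.card * (6 * (s + 1) * d ^ 3) := by ring

/-- `N` separates `u` from the other vertices of `S` at distance `r`: every walk of length at most
`r` from `u` to a vertex of `S` other than `u` meets `N`. The vertex `u` itself does not belong to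
`N`, but vertices of `S` may. -/
def IsSeparator (G : SimpleGraph V) (N : Finset V) (S : Set V) (u : V) (r : ℕ) : Prop :=
  u ∉ N ∧ ∀ z ∈ S, z ≠ u → ∀ p : G.Walk u z, p.length ≤ r → ∃ x ∈ N, x ∈ p.support

theorem IsSeparator.anti {N : Finset V} {n : ℕ} (h : IsSeparator G N S u r) (hn : n ≤ r) :
    IsSeparator G N S u n :=
  ⟨h.1, fun z hz hzu p hp => h.2 z hz hzu p (hp.trans hn)⟩

theorem BConnGE.succ_or_exists_isSeparator (h : BConnGE G S u r m) :
    BConnGE G S u r (m + 1) ∨ ∃ N : Finset V, N.card ≤ m * r ∧ IsSeparator G N S u r := by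
  classical
  obtain ⟨t, P, hpath, hlength, ht, hinner, hdisj⟩ := h
  let N : Finset V := Finset.univ.biUnion fun i => (P i).support.tail.toFinset
  have hcard : N.card ≤ m * r := by
    simpa using Finset.card_biUnion_le_card_mul Finset.univ
      (fun i => (P i).support.tail.toFinset) r fun i _ =>
        (List.toFinset_card_le _).trans (by simpa using hlength i)
  have huN : u ∉ N := by
    have hu (i) : u ∉ (P i).support.tail := by
      have := (hpath i).support_nodup
      rw [← (P i).cons_tail_support] at this
      exact (List.nodup_cons.mp this).1
    simpa [N] using hu
  refine or_iff_not_imp_right.mpr fun hN => ?_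
  simp only [not_exists, not_and] at hN
  have hsep := hN N hcard
  simp only [IsSeparator] at hsep
  push Not at hsep
  obtain ⟨z, hzS, hzu, p, hp, havoid⟩ := hsep huN
  obtain ⟨c, hc, q, hq, hqp, hsub, hfirst⟩ :=
    exists_isPath_first_mem p (B := S \ {u}) ⟨hzS, hzu⟩
  have hnew (i) (w : V) (hwq : w ∈ q.support) (hwi : w ∈ (P i).support) : w = u := by
    refine ((P i).mem_support_iff.mp hwi).resolve_right fun hw => havoid w ?_ (hsub hwq)
    exact Finset.mem_biUnion.mpr ⟨i, Finset.mem_univ i, List.mem_toFinset.mpr hw⟩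
  refine ⟨Fin.cons c t, Fin.cons q P, ?_, ?_, ?_, ?_, ?_⟩
  · exact Fin.forall_fin_succ.mpr ⟨hq, hpath⟩
  · exact Fin.forall_fin_succ.mpr ⟨hqp.trans hp, hlength⟩
  · exact Fin.forall_fin_succ.mpr ⟨hc, ht⟩
  · exact Fin.forall_fin_succ.mpr
      ⟨fun w hw hwu hwc hwS => hwc (hfirst w hw ⟨hwS, hwu⟩), hinner⟩
  · exact Fin.forall_fin_succ.mpr
      ⟨Fin.forall_fin_succ.mpr ⟨fun h => absurd rfl h, fun i _ => hnew i⟩, fun i =>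
        Fin.forall_fin_succ.mpr ⟨fun _ w hwi hwq => hnew i w hwq hwi,
          fun j hij => hdisj i j fun h => hij (congrArg Fin.succ h)⟩⟩

theorem exists_isSeparator_of_not_bConnGE (h : ¬ BConnGE G S u r (m + 1)) :
    ∃ N : Finset V, N.card ≤ m * r ∧ IsSeparator G N S u r := by
  induction m with
  | zero =>
    have hzero : BConnGE G S u r 0 := ⟨nofun, nofun, nofun, nofun, nofun, nofun, nofun⟩
    exact hzero.succ_or_exists_isSeparator.resolve_left h
  | succ m ih =>
    by_cases hm : BConnGE G S u r (m + 1)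
    · exact hm.succ_or_exists_isSeparator.resolve_left h
    · obtain ⟨N, hN, hsep⟩ := ih hm
      exact ⟨N, hN.trans (Nat.mul_le_mul_right r m.le_succ), hsep⟩

end BackConnectivity

section Orderings

variable {V : Type} {G : SimpleGraph V} {σ : V → ℕ}

theorem exists_injOn_forall_le {α : Type*} {Q : Set α → α → Prop}
    (hQ : ∀ S : Finset α, S.Nonempty → ∃ u ∈ S, Q S u) (S : Finset α) :
    ∃ σ : α → ℕ, Set.InjOn σ S ∧ (∀ x ∈ S, σ x < S.card) ∧
      ∀ v ∈ S, Q {x | x ∈ S ∧ σ x ≤ σ v} v := by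
  classical
  induction S using Finset.strongInduction with
  | H S ih =>
    obtain rfl | hS := S.eq_empty_or_nonempty
    · exact ⟨0, by simp⟩
    obtain ⟨u, hu, hQu⟩ := hQ S hS
    obtain ⟨σ, hinj, hlt, hσ⟩ := ih (S.erase u) (Finset.erase_ssubset hu)
    let τ := Function.update σ u (S.erase u).card
    have hτu : τ u = (S.erase u).card := Function.update_self ..
    have hτ {x} (hx : x ≠ u) : τ x = σ x := Function.update_of_ne hx ..
    have hτlt {x} (hx : x ∈ S) (hxu : x ≠ u) : τ x < τ u := by
      rw [hτ hxu, hτu]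
      exact hlt x (Finset.mem_erase.mpr ⟨hxu, hx⟩)
    have hτle {x} (hx : x ∈ S) : τ x ≤ τ u := by
      obtain rfl | hxu := eq_or_ne x u
      exacts [le_rfl, (hτlt hx hxu).le]
    refine ⟨τ, fun x hx y hy h => ?_, fun x hx => ?_, fun v hv => ?_⟩
    · obtain rfl | hxu := eq_or_ne x u
      · by_contra hyx
        exact (hτlt hy (Ne.symm hyx)).ne h.symm
      obtain rfl | hyu := eq_or_ne y u
      · exact absurd h (hτlt hx hxu).ne
      rw [hτ hxu, hτ hyu] at h
      exact hinj (Finset.mem_erase.mpr ⟨hxu, hx⟩) (Finset.mem_erase.mpr ⟨hyu, hy⟩) h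
    · exact (hτle hx).trans_lt (hτu ▸ Finset.card_erase_lt_of_mem hu)
    · obtain rfl | hvu := eq_or_ne v u
      · convert hQu using 1
        exact Set.ext fun x => and_iff_left_of_imp hτle
      · convert hσ v (Finset.mem_erase.mpr ⟨hvu, hv⟩) using 1
        ext x
        obtain rfl | hxu := eq_or_ne x u
        · simpa using fun _ => hτlt hv hvu
        · simp [hτ hxu, hτ hvu, hxu]

theorem exists_injective_forall_le {α : Type*} [Finite α] {Q : Set α → α → Prop}
    (hQ : ∀ S : Set α, S.Nonempty → ∃ u ∈ S, Q S u) :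
    ∃ σ : α → ℕ, Function.Injective σ ∧ ∀ v, Q {x | σ x ≤ σ v} v := by
  have := Fintype.ofFinite α
  obtain ⟨σ, hinj, -, hσ⟩ := exists_injOn_forall_le (Q := Q)
    (fun S hS => hQ S (Finset.coe_nonempty.mpr hS)) Finset.univ
  exact ⟨σ, by simpa using hinj, fun v => by simpa using hσ v (Finset.mem_univ v)⟩

theorem wReach_zero_subset (v : V) : WReach G σ 0 v ⊆ {v} := by
  rintro x ⟨-, p, -, hp, -⟩
  exact (Walk.eq_of_length_eq_zero (Nat.le_zero.mp hp)).symm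

theorem IsSeparator.wReach_succ_subset {N : Finset V} {v : V} {n : ℕ}
    (hσ : Function.Injective σ) (hN : IsSeparator G N {x | σ x ≤ σ v} v (n + 1)) :
    WReach G σ (n + 1) v ⊆ {v} ∪ ⋃ y ∈ N, WReach G σ n y := by
  classical
  rintro x ⟨hxv, p, hpath, hlength, hinner⟩
  obtain rfl | hne := eq_or_ne x v
  · exact Or.inl rfl
  obtain ⟨y, hyN, hyp⟩ := hN.2 x hxv hne p hlength
  have hyv : y ≠ v := fun h => hN.1 (h ▸ hyN)
  have hlt (w) (hw : w ∈ p.support) (hwx : w ≠ x) : σ x < σ w := by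
    obtain rfl | hwv := eq_or_ne w v
    · exact lt_of_le_of_ne hxv (hσ.ne hne)
    · exact hinner w hw hwv hwx
  refine Or.inr (Set.mem_biUnion hyN ⟨?_, p.dropUntil y hyp, hpath.dropUntil hyp, ?_, ?_⟩)
  · obtain rfl | hyx := eq_or_ne y x
    exacts [le_rfl, (hlt y hyp hyx).le]
  · have := Walk.length_dropUntil_lt_length hyp hyv
    omega
  · exact fun w hw _ hwx => hlt w (p.support_dropUntil_subset_support hyp hw) hwx

theorem ncard_wReach_le [Finite V] {r K : ℕ} {N : V → Finset V} (hσ : Function.Injective σ)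
    (hK : ∀ v, (N v).card ≤ K) (hN : ∀ v, IsSeparator G (N v) {x | σ x ≤ σ v} v r) {n : ℕ}
    (hn : n ≤ r) (v : V) : (WReach G σ n v).ncard ≤ ∑ i ∈ Finset.range (n + 1), K ^ i := by
  induction n generalizing v with
  | zero => simpa using Set.ncard_le_ncard (wReach_zero_subset v)
  | succ n ih =>
    calc (WReach G σ (n + 1) v).ncard
        ≤ ({v} ∪ ⋃ y ∈ N v, WReach G σ n y).ncard :=
          Set.ncard_le_ncard (((hN v).anti hn).wReach_succ_subset hσ)
      _ ≤ 1 + ∑ y ∈ N v, (WReach G σ n y).ncard := by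
          refine (Set.ncard_union_le _ _).trans ?_
          rw [Set.ncard_singleton]
          exact Nat.add_le_add_left ((N v).set_ncard_biUnion_le _) 1
      _ ≤ 1 + K * ∑ i ∈ Finset.range (n + 1), K ^ i := by
          gcongr
          refine (Finset.sum_le_card_nsmul _ _ _ fun y _ => ih (Nat.le_of_succ_le hn) y).trans ?_
          exact Nat.mul_le_mul_right _ (hK v)
      _ = ∑ i ∈ Finset.range (n + 1 + 1), K ^ i := by
          rw [Finset.sum_range_succ' _ (n + 1), pow_zero, add_comm, Finset.mul_sum]
          simp only [pow_succ']

end Orderings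

/-- If every depth-`(r−1)` topological minor of `G` has edge density at most `d`
(`r, d ≥ 1`), then `G` has a vertex ordering `σ` with
`wcol_r(G,σ) ≤ ((6r²d³)^{r+1} − 1)/(6r²d³ − 1)`. -/
theorem stmt7 {V : Type} [Fintype V] (G : SimpleGraph V) (r d : ℕ) (hr : 1 ≤ r) (hd : 1 ≤ d)
    (hminor : ¬ HasDepthTopMinorDensityGT G (r - 1) (d : ℝ)) :
    ∃ σ : V → ℕ, Function.Injective σ ∧
      wcolOrd G σ r ≤ ((6 * r ^ 2 * d ^ 3) ^ (r + 1) - 1) / (6 * r ^ 2 * d ^ 3 - 1) := by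
  obtain ⟨s, rfl⟩ : ∃ s, r = s + 1 := ⟨r - 1, (Nat.sub_add_cancel hr).symm⟩
  rw [Nat.add_sub_cancel] at hminor
  obtain ⟨σ, hσ, hconn⟩ := exists_injective_forall_le
    (Q := fun S u => ¬ BConnGE G S u (s + 1) (6 * (s + 1) * d ^ 3 + 1)) fun S hS => by
      by_contra! h
      have := le_of_forall_bConnGE hd hminor hS h
      omega
  choose N hcard hsep using fun v => exists_isSeparator_of_not_bConnGE (hconn v)
  have hK : 2 ≤ 6 * (s + 1) ^ 2 * d ^ 3 := by
    have : 0 < (s + 1) ^ 2 * d ^ 3 := by positivity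
    lia
  refine ⟨σ, hσ, ?_⟩
  rw [← Nat.geomSum_eq hK]
  exact Finset.sup_le fun v _ =>
    ncard_wReach_le hσ (fun v => (hcard v).trans_eq (by ring)) hsep le_rfl v
end

section
/- Let h ∈ ℕ and let G be a finite simple graph of treedepth at most h. Then every DFS forest of G has depth strictly smaller than 2^h; in particular, every DFS forest of G is a separation forest of G of depth smaller than 2^h. -/
/-- `A` is (the ancestor relation of) a separation forest of `G`: a partial order in which
the set of ancestors of each node is a finite chain — i.e. a rooted forest, where
`A u v` means "`u` is an ancestor of `v`" (every node being its own ancestor) —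
such that every edge of `G` joins an ancestor to its descendant. -/
structure IsSepForest {V : Type} (G : SimpleGraph V) (A : V → V → Prop) : Prop where
  refl : ∀ v, A v v
  antisymm : ∀ u v, A u v → A v u → u = v
  trans : ∀ u v w, A u v → A v w → A u w
  chain : ∀ v u w, A u v → A w v → A u w ∨ A w u
  finite : ∀ v, {u | A u v}.Finite
  sep : ∀ u v, G.Adj u v → A u v ∨ A v u

/-- The depth of a node `v` in a rooted forest with ancestor relation `A` is its number of
ancestors; the depth of the forest is the maximum depth of a node.
The treedepth of `G` is the minimum depth of a separation forest of `G`. -/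
noncomputable def treedepth {V : Type} (G : SimpleGraph V) : ℕ :=
  sInf {h | ∃ A : V → V → Prop, IsSepForest G A ∧ ∀ v, {u | A u v}.ncard ≤ h}

/-- In a rooted forest with ancestor relation `A`, `u` is the parent of `v` if `u` is a
strict ancestor of `v` and every strict ancestor of `v` is an ancestor of `u`. -/
def IsParent {V : Type} (A : V → V → Prop) (u v : V) : Prop :=
  A u v ∧ u ≠ v ∧ ∀ w, A w v → w ≠ v → A w u

/-- `A` is (the ancestor relation of) a DFS forest of `G`: a rooted forest on the vertex set
of `G` such that every edge of `G` joins an ancestor to its descendant, and whenever `u` is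
the parent of `v`, `uv` is an edge of `G`. -/
def IsDFSForest {V : Type} (G : SimpleGraph V) (A : V → V → Prop) : Prop :=
  IsSepForest G A ∧ ∀ u v, IsParent A u v → G.Adj u v

/-! In a separation forest of depth at most `h`, a path on `n` vertices satisfies `n < 2 ^ h`: since
consecutive vertices of the path are comparable, one of its vertices is an ancestor of all the
others, and deleting it leaves two paths on which the depth has dropped by one. In a DFS forest the
ancestors of a vertex are the vertices of a path, obtained by following parents up to the root. -/

theorem isSepForest_le {V : Type} [LinearOrder V] (G : SimpleGraph V)
    (hfin : ∀ v : V, (Set.Iic v).Finite) : IsSepForest G (· ≤ ·) where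
  refl := le_refl
  antisymm _ _ := le_antisymm
  trans _ _ _ := le_trans
  chain _ u w _ _ := le_total u w
  finite := hfin
  sep u v _ := le_total u v

theorem exists_isSepForest_ncard_le_treedepth {V : Type} [Finite V] (G : SimpleGraph V) :
    ∃ B : V → V → Prop, IsSepForest G B ∧ ∀ v, {u | B u v}.ncard ≤ treedepth G := by
  let _ : LinearOrder V := LinearOrder.lift' (Finite.equivFin V) (Finite.equivFin V).injective
  have hle : IsSepForest G (· ≤ ·) := isSepForest_le G fun _ ↦ Set.toFinite _
  exact Nat.sInf_mem (s := {h | ∃ B, IsSepForest G B ∧ ∀ v, {u | B u v}.ncard ≤ h})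
    ⟨Nat.card V, _, hle, fun _ ↦ Set.ncard_le_card _⟩

namespace IsSepForest

variable {V : Type} {G : SimpleGraph V} {A : V → V → Prop}

theorem ncard_ancestors_lt (hA : IsSepForest G A) {u v : V} (huv : A u v) (hne : u ≠ v) :
    {w | A w u}.ncard < {w | A w v}.ncard := by
  refine Set.ncard_lt_ncard ⟨fun w hw ↦ hA.trans _ _ _ hw huv, fun hsub ↦ hne ?_⟩ (hA.finite v)
  exact hA.antisymm _ _ huv (hsub (hA.refl v))

theorem exists_isParent (hA : IsSepForest G A) {u v : V} (huv : A u v) (hne : u ≠ v) :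
    ∃ p, IsParent A p v := by
  have hfin : {w | A w v ∧ w ≠ v}.Finite := (hA.finite v).subset fun _ hw ↦ hw.1
  obtain ⟨p, ⟨hpv, hpne⟩, hdeepest⟩ :=
    Set.exists_max_image _ (fun w ↦ {x | A x w}.ncard) hfin ⟨u, huv, hne⟩
  refine ⟨p, hpv, hpne, fun w hwv hwne ↦ (hA.chain v w p hwv hpv).elim id fun hpw ↦ ?_⟩
  obtain rfl : p = w := by
    by_contra hpw_ne
    exact (hA.ncard_ancestors_lt hpw hpw_ne).not_ge (hdeepest w ⟨hwv, hwne⟩)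
  exact hpw

theorem ancestor_iff_of_isParent (hA : IsSepForest G A) {p v : V} (hp : IsParent A p v) (u : V) :
    A u v ↔ u = v ∨ A u p := by
  obtain ⟨hpv, -, hmax⟩ := hp
  refine ⟨fun huv ↦ or_iff_not_imp_left.2 (hmax u huv), ?_⟩
  rintro (rfl | hup)
  · exact hA.refl u
  · exact hA.trans _ _ _ hup hpv

theorem exists_mem_forall_ancestor_of_isChain (hA : IsSepForest G A) {l : List V} (hne : l ≠ [])
    (hl : l.IsChain G.Adj) : ∃ r ∈ l, ∀ x ∈ l, A r x := by
  induction l with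
  | nil => exact absurd rfl hne
  | cons a t ih =>
    obtain _ | ⟨b, t⟩ := t
    · exact ⟨a, by simp, by simpa using hA.refl a⟩
    obtain ⟨hab, ht⟩ := List.isChain_cons_cons.1 hl
    obtain ⟨r, hr, hroot⟩ := ih (by simp) ht
    have hrb : A r b := hroot b (by simp)
    have hra : A r a ∨ A a r :=
      (hA.sep a b hab).elim (hA.chain b r a hrb) fun hba ↦ .inl (hA.trans _ _ _ hrb hba)
    rcases hra with hra | har
    · exact ⟨r, List.mem_cons_of_mem a hr, List.forall_mem_cons.2 ⟨hra, hroot⟩⟩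
    · exact ⟨a, by simp, List.forall_mem_cons.2
        ⟨hA.refl a, fun x hx ↦ hA.trans _ _ _ har (hroot x hx)⟩⟩

theorem ncard_ancestors_inter_lt (hA : IsSepForest G A) {s t : Set V} (hst : s ⊆ t) {r x : V}
    (hrt : r ∈ t) (hrs : r ∉ s) (hrx : A r x) :
    {u ∈ s | A u x}.ncard < {u ∈ t | A u x}.ncard := by
  refine Set.ncard_lt_ncard ⟨fun u hu ↦ ⟨hst hu.1, hu.2⟩, fun hsub ↦ hrs ?_⟩
    ((hA.finite x).subset fun _ hu ↦ hu.2)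
  exact (hsub ⟨hrt, hrx⟩).1

-- Counting only ancestors inside `l` is what makes the bound drop when the root of `l` is deleted.
theorem length_lt_two_pow_of_isChain (hA : IsSepForest G A) {k : ℕ} {l : List V}
    (hl : l.IsChain G.Adj) (hnodup : l.Nodup)
    (hk : ∀ x ∈ l, {u ∈ l | A u x}.ncard ≤ k) : l.length < 2 ^ k := by
  induction k generalizing l with
  | zero =>
    suffices l = [] by simp [this]
    refine List.eq_nil_iff_forall_not_mem.2 fun x hx ↦ ?_
    have hempty : {u ∈ l | A u x} = ∅ :=
      (Set.ncard_eq_zero ((hA.finite x).subset fun _ hu ↦ hu.2)).1 (Nat.le_zero.1 (hk x hx))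
    exact hempty.subset ⟨hx, hA.refl x⟩
  | succ k ih =>
    obtain rfl | hne := eq_or_ne l []
    · simp
    obtain ⟨r, hr, hroot⟩ := hA.exists_mem_forall_ancestor_of_isChain hne hl
    have hdrop {m : List V} (hm : m ⊆ l) (hrm : r ∉ m) :
        ∀ x ∈ m, {u ∈ m | A u x}.ncard ≤ k := fun x hx ↦
      Nat.le_of_lt_succ <| (hA.ncard_ancestors_inter_lt (s := {u | u ∈ m}) (t := {u | u ∈ l})
        hm hr hrm (hroot x (hm hx))).trans_le (hk x (hm hx))
    obtain ⟨s, t, rfl⟩ := List.append_of_mem hr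
    obtain ⟨hs, ht⟩ := List.isChain_split.1 hl
    obtain ⟨hrst, hst⟩ := List.nodup_cons.1 (List.nodup_middle.1 hnodup)
    rw [List.mem_append, not_or] at hrst
    have hs_len : s.length < 2 ^ k :=
      ih hs.left_of_append hst.of_append_left (hdrop (by simp) hrst.1)
    have ht_len : t.length < 2 ^ k :=
      ih ht.tail hst.of_append_right (hdrop (by simp) hrst.2)
    rw [List.length_append, List.length_cons, pow_succ]
    lia

theorem length_support_lt_two_pow_of_isPath (hA : IsSepForest G A) {h : ℕ}
    (hdepth : ∀ v, {u | A u v}.ncard ≤ h) {v w : V} {p : G.Walk v w} (hp : p.IsPath) :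
    p.support.length < 2 ^ h :=
  hA.length_lt_two_pow_of_isChain p.isChain_adj_support hp.support_nodup fun x _ ↦
    (Set.ncard_le_ncard (fun _ hu ↦ hu.2) (hA.finite x)).trans (hdepth x)

end IsSepForest

theorem IsDFSForest.exists_isPath_support {V : Type} {G : SimpleGraph V} {A : V → V → Prop}
    (hA : IsDFSForest G A) (v : V) :
    ∃ (r : V) (p : G.Walk v r), p.IsPath ∧ ∀ u, u ∈ p.support ↔ A u v := by
  obtain ⟨hsep, hadj⟩ := hA
  induction v using (measure fun v ↦ {u | A u v}.ncard).wf.induction with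
  | _ v ih =>
  by_cases hroot : ∃ q, IsParent A q v
  · obtain ⟨q, hq⟩ := hroot
    have ⟨hqv, hne, _⟩ := hq
    obtain ⟨r, p, hp, hmem⟩ := ih q (hsep.ncard_ancestors_lt hqv hne)
    have hv : v ∉ p.support := fun hvp ↦ hne (hsep.antisymm _ _ hqv ((hmem v).1 hvp))
    refine ⟨r, .cons (hadj q v hq).symm p, hp.cons hv, fun u ↦ ?_⟩
    rw [SimpleGraph.Walk.support_cons, List.mem_cons, hmem, hsep.ancestor_iff_of_isParent hq]
  · have hself (u : V) (huv : A u v) : u = v :=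
      by_contra fun hne ↦ hroot (hsep.exists_isParent huv hne)
    refine ⟨v, .nil, .nil, fun u ↦ ?_⟩
    rw [SimpleGraph.Walk.support_nil, List.mem_singleton]
    exact ⟨fun huv ↦ huv ▸ hsep.refl v, hself u⟩

theorem stmt13_general {V : Type} {G : SimpleGraph V} {A B : V → V → Prop} {h : ℕ}
    (hA : IsDFSForest G A) (hB : IsSepForest G B) (hdepth : ∀ v, {u | B u v}.ncard ≤ h) (v : V) :
    {u | A u v}.ncard < 2 ^ h := by
  classical
  obtain ⟨r, p, hp, hmem⟩ := hA.exists_isPath_support v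
  have hancestors : {u | A u v} = p.support.toFinset := by ext u; simp [hmem]
  calc {u | A u v}.ncard
    _ = p.support.length := by
      rw [hancestors, Set.ncard_coe_finset, List.toFinset_card_of_nodup hp.support_nodup]
    _ < 2 ^ h := hB.length_support_lt_two_pow_of_isPath hdepth hp

/-- Every DFS forest of a graph of treedepth at most `h` has depth strictly smaller
than `2^h` (every node has fewer than `2^h` ancestors); in particular it is a separation
forest of `G` of depth smaller than `2^h`. -/
theorem stmt13 {V : Type} [Fintype V] (G : SimpleGraph V) (h : ℕ) (htd : treedepth G ≤ h)
    (A : V → V → Prop) (hA : IsDFSForest G A) :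
    ∀ v : V, {u | A u v}.ncard < 2 ^ h := by
  obtain ⟨B, hB, hdepth⟩ := exists_isSepForest_ncard_le_treedepth G
  exact stmt13_general hA hB fun v ↦ (hdepth v).trans htd
end

section
/- Let r ∈ ℕ, let G be a finite simple graph, and let σ be a vertex ordering of G. For each vertex u, let d(u) be the σ-smallest vertex of WReach_r[G,σ,u], and set D = {d(u) : u ∈ V(G)}. Then D is a distance-r dominating set of G and |D| ≤ wcol_{2r}(G,σ) · dom_r(G). -/
/-- `D` is a distance-`r` dominating set of `G`: every vertex is at distance at most `r`
from some vertex of `D`. -/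
def IsDistDomSet {V : Type} (G : SimpleGraph V) (r : ℕ) (D : Set V) : Prop :=
  ∀ v : V, ∃ u ∈ D, ∃ p : G.Walk u v, p.length ≤ r

/-- `dom_r(G)`: the minimum size of a distance-`r` dominating set of `G`. -/
noncomputable def domNum {V : Type} (G : SimpleGraph V) (r : ℕ) : ℕ :=
  sInf {k | ∃ D : Set V, IsDistDomSet G r D ∧ D.ncard = k}

/-!
Fix a distance-`r` dominating set `M`. A vertex `u` is joined to some `m ∈ M` by a walk of length
at most `r`. The smallest vertex of this walk is weakly `r`-reachable from `u`, so the smallest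
vertex `d` of `WReach_r[u]` lies below the whole walk. Following the walk from `m` to `u` and then
a path from `u` to `d` therefore shows `d ∈ WReach_{2r}[m]`. Hence all the vertices `d` lie in the
union of the sets `WReach_{2r}[m]` over `m ∈ M`.
-/

section WReach

variable {V : Type} {G : SimpleGraph V} {σ : V → ℕ} {r s : ℕ} {u v d : V}

lemma mem_wReach_iff_exists_walk (hσ : Function.Injective σ) :
    u ∈ WReach G σ r v ↔ ∃ p : G.Walk v u, p.length ≤ r ∧ ∀ w ∈ p.support, σ u ≤ σ w := by
  classical
  constructor
  · rintro ⟨huv, p, -, hlen, hint⟩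
    refine ⟨p, hlen, fun w hw => ?_⟩
    by_cases hwv : w = v
    · exact hwv ▸ huv
    by_cases hwu : w = u
    · rw [hwu]
    · exact (hint w hw hwv hwu).le
  · rintro ⟨p, hlen, hmin⟩
    refine ⟨hmin v p.start_mem_support, p.bypass, p.bypass_isPath,
      p.length_bypass_le_length.trans hlen, fun w hw _ hwu => ?_⟩
    exact (hmin w (p.support_bypass_subset_support hw)).lt_of_ne (hσ.ne (Ne.symm hwu))

lemma exists_mem_wReach_forall_mem_support_le (hσ : Function.Injective σ) (q : G.Walk u v)
    (hq : q.length ≤ r) : ∃ z ∈ WReach G σ r u, ∀ w ∈ q.support, σ z ≤ σ w := by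
  classical
  obtain ⟨z, hz, hmin⟩ : ∃ z ∈ q.support, ∀ w ∈ q.support, σ z ≤ σ w := by
    simpa only [List.mem_toFinset] using
      q.support.toFinset.exists_min_image σ ⟨u, List.mem_toFinset.2 q.start_mem_support⟩
  refine ⟨z, (mem_wReach_iff_exists_walk hσ).2 ⟨q.takeUntil z hz, ?_, fun w hw => ?_⟩, hmin⟩
  · exact (q.length_takeUntil_le_length hz).trans hq
  · exact hmin w (q.support_takeUntil_subset_support hz hw)

lemma mem_wReach_add_of_walk (hσ : Function.Injective σ) (hd : d ∈ WReach G σ r u)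
    (q : G.Walk v u) (hq : q.length ≤ s) (hle : ∀ w ∈ q.support, σ d ≤ σ w) :
    d ∈ WReach G σ (s + r) v := by
  obtain ⟨p, hp, hmin⟩ := (mem_wReach_iff_exists_walk hσ).1 hd
  refine (mem_wReach_iff_exists_walk hσ).2 ⟨q.append p, ?_, fun w hw => ?_⟩
  · rw [SimpleGraph.Walk.length_append]
    exact add_le_add hq hp
  · exact ((SimpleGraph.Walk.mem_support_append_iff _ _).1 hw).elim (hle w) (hmin w)

lemma mem_wReach_add_of_forall_le (hσ : Function.Injective σ) (hd : d ∈ WReach G σ r u)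
    (hmin : ∀ w ∈ WReach G σ s u, σ d ≤ σ w) (q : G.Walk v u) (hq : q.length ≤ s) :
    d ∈ WReach G σ (s + r) v := by
  obtain ⟨z, hz, hzq⟩ :=
    exists_mem_wReach_forall_mem_support_le hσ q.reverse (q.length_reverse.trans_le hq)
  refine mem_wReach_add_of_walk hσ hd q hq fun w hw => (hmin z hz).trans (hzq w ?_)
  rwa [SimpleGraph.Walk.support_reverse, List.mem_reverse]

end WReach

section DistDomSet

variable {V : Type} {G : SimpleGraph V} {σ : V → ℕ} {r : ℕ} {f : V → V}

lemma isDistDomSet_range_of_mem_wReach (hf : ∀ u, f u ∈ WReach G σ r u) :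
    IsDistDomSet G r (Set.range f) := fun v =>
  let ⟨_, p, _, hlen, _⟩ := hf v
  ⟨f v, Set.mem_range_self v, p.reverse, p.length_reverse.trans_le hlen⟩

lemma IsDistDomSet.range_subset_biUnion_wReach (hσ : Function.Injective σ)
    (hf : ∀ u, f u ∈ WReach G σ r u ∧ ∀ w ∈ WReach G σ r u, σ (f u) ≤ σ w)
    {M : Set V} (hM : IsDistDomSet G r M) :
    Set.range f ⊆ ⋃ m ∈ M, WReach G σ (2 * r) m := by
  rintro _ ⟨u, rfl⟩
  obtain ⟨m, hm, q, hq⟩ := hM u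
  rw [two_mul]
  exact Set.mem_biUnion hm (mem_wReach_add_of_forall_le hσ (hf u).1 (hf u).2 q hq)

end DistDomSet

section Cardinality

lemma encard_biUnion_le_mul_encard {ι α : Type*} {t : Set ι} {s : ι → Set α} {c : ℕ∞}
    (hs : ∀ i ∈ t, (s i).encard ≤ c) : (⋃ i ∈ t, s i).encard ≤ c * t.encard := by
  obtain ht | ht := t.finite_or_infinite
  · lift t to Finset ι using ht
    calc (⋃ i ∈ t, s i).encard ≤ ∑ i ∈ t, (s i).encard := t.set_encard_biUnion_le s
      _ ≤ t.card • c := t.sum_le_card_nsmul _ c hs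
      _ = c * (t : Set ι).encard := by rw [Set.encard_coe_eq_coe_finsetCard, nsmul_eq_mul, mul_comm]
  · obtain rfl | hc := eq_or_ne c 0
    · have hempty : ∀ i ∈ t, s i = ∅ := by simpa using hs
      simpa using hempty
    · rw [ht.encard_eq, ENat.mul_top hc]
      exact le_top

variable {V : Type} (G : SimpleGraph V) (r : ℕ)

lemma natCast_wcolOrd [Fintype V] (σ : V → ℕ) :
    (wcolOrd G σ r : ℕ∞) = ⨆ v, (WReach G σ r v).encard := by
  rw [wcolOrd, Finset.apply_sup_eq_sup_comp_of_linearOrder Nat.cast Nat.mono_cast Nat.cast_zero,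
    Finset.sup_univ_eq_iSup]
  exact iSup_congr fun v => (Set.toFinite _).cast_ncard_eq

lemma natCast_domNum [Finite V] :
    (domNum G r : ℕ∞) = ⨅ D, ⨅ _ : IsDistDomSet G r D, D.encard := by
  have hne : {k | ∃ D : Set V, IsDistDomSet G r D ∧ D.ncard = k}.Nonempty :=
    ⟨_, Set.univ, fun v => ⟨v, Set.mem_univ v, .nil, Nat.zero_le r⟩, rfl⟩
  rw [domNum, ENat.natCast_sInf hne]
  simp only [Set.mem_ofPred_eq, iInf_exists, iInf_and]
  rw [iInf_comm]
  refine iInf_congr fun D => ?_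
  rw [iInf_comm]
  simp only [iInf_iInf_eq_right, (Set.toFinite D).cast_ncard_eq]

end Cardinality

theorem stmt14_general {V : Type} (G : SimpleGraph V) (σ : V → ℕ)
    (hσ : Function.Injective σ) (r : ℕ) (dfun : V → V)
    (hdfun : ∀ u : V, dfun u ∈ WReach G σ r u ∧ ∀ w ∈ WReach G σ r u, σ (dfun u) ≤ σ w) :
    IsDistDomSet G r (Set.range dfun) ∧
      (Set.range dfun).encard ≤
        (⨆ v, (WReach G σ (2 * r) v).encard) * ⨅ D, ⨅ _ : IsDistDomSet G r D, D.encard := by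
  have hdom : IsDistDomSet G r (Set.range dfun) :=
    isDistDomSet_range_of_mem_wReach fun u => (hdfun u).1
  refine ⟨hdom, ?_⟩
  obtain ⟨M, hM, hMmin⟩ : ∃ M, IsDistDomSet G r M ∧ M.encard =
      ⨅ D, ⨅ _ : IsDistDomSet G r D, D.encard := by
    have h := csInf_mem (Set.Nonempty.image Set.encard (s := {D | IsDistDomSet G r D}) ⟨_, hdom⟩)
    rwa [sInf_image] at h
  rw [← hMmin]
  calc (Set.range dfun).encard
      ≤ (⋃ m ∈ M, WReach G σ (2 * r) m).encard :=
        Set.encard_le_encard (hM.range_subset_biUnion_wReach hσ hdfun)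
    _ ≤ (⨆ v, (WReach G σ (2 * r) v).encard) * M.encard :=
        encard_biUnion_le_mul_encard fun m _ =>
          le_iSup (fun v => (WReach G σ (2 * r) v).encard) m

/-- Let `σ` be a vertex ordering of `G`. For each vertex `u` let `dfun u` be the `σ`-smallest
vertex of `WReach_r[G,σ,u]`. Then `D = {dfun u : u ∈ V(G)}` is a distance-`r` dominating set
of `G` with `|D| ≤ wcol_{2r}(G,σ) · dom_r(G)`. -/
theorem stmt14 {V : Type} [Fintype V] (G : SimpleGraph V) (σ : V → ℕ)
    (hσ : Function.Injective σ) (r : ℕ) (dfun : V → V)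
    (hdfun : ∀ u : V, dfun u ∈ WReach G σ r u ∧ ∀ w ∈ WReach G σ r u, σ (dfun u) ≤ σ w) :
    IsDistDomSet G r (Set.range dfun) ∧
      (Set.range dfun).ncard ≤ wcolOrd G σ (2 * r) * domNum G r := by
  have h := stmt14_general G σ hσ r dfun hdfun
  rw [← natCast_wcolOrd, ← natCast_domNum, ← (Set.toFinite _).cast_ncard_eq] at h
  exact_mod_cast h
end

section
/- Let d ∈ ℕ, let Λ be a finite label set, let k ≥ 1, and let φ(x_1,…,x_k) = ∃y ψ(x_1,…,x_k,y), where ψ is an lcd-reduced formula over {parent} ∪ Λ. Then there exist a finite label set Λ̂ and an lcd-reduced formula φ̂(x_1,…,x_k) over {parent} ∪ Λ̂ such that for every Λ-labeled forest 𝕋 of depth at most d there is a Λ̂-relabeling 𝕊 of 𝕋 with φ(𝕋) = φ̂(𝕊), i.e., a k-tuple of nodes satisfies φ in 𝕋 if and only if it satisfies φ̂ in 𝕊. -/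
/-- `u` is an ancestor of `v` with respect to the parent relation `P` (`P x y` meaning
"`x` is the parent of `y`"): `u` is reachable from `v` by repeatedly passing to parents,
`v` itself included. -/
def ancestorRel {M : Type} (P : M → M → Prop) (u v : M) : Prop :=
  Relation.ReflTransGen (fun a b => P b a) v u

/-- `P` is the parent relation of a rooted forest of depth at most `d`: every node has at
most one parent, there are no cycles when passing to parents, and every node has a finite
set of at most `d` ancestors (each node counting as its own ancestor). -/
def IsForestParentDepthLE {M : Type} (P : M → M → Prop) (d : ℕ) : Prop :=
  (∀ x y z, P x z → P y z → x = y) ∧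
  (∀ x : M, ¬ Relation.TransGen (fun a b => P b a) x x) ∧
  (∀ v : M, {u | ancestorRel P u v}.Finite ∧ {u | ancestorRel P u v}.ncard ≤ d)

/-- lcd-reduced formulas over the vocabulary `{parent} ∪ Λ` with free variables
`x_1, …, x_k`: boolean combinations of unary label atoms `c(x_i)` (for `c ∈ Λ`)
and atoms `lcd_j(x_i, x_{i'})` (for `j ∈ {0,…,d}`). -/
inductive LcdReduced (Λ : Type) (d k : ℕ) : Type
  | label : Λ → Fin k → LcdReduced Λ d k
  | lcd : Fin (d + 1) → Fin k → Fin k → LcdReduced Λ d k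
  | not : LcdReduced Λ d k → LcdReduced Λ d k
  | and : LcdReduced Λ d k → LcdReduced Λ d k → LcdReduced Λ d k
  | or : LcdReduced Λ d k → LcdReduced Λ d k → LcdReduced Λ d k

/-- Realization of an lcd-reduced formula in a `Λ`-labeled forest with universe `M`,
parent relation `P`, and labeling `L : Λ → M → Prop`, under an assignment `v` of the free
variables: the atom `lcd_j(x,y)` is interpreted as "`x` and `y` have exactly `j` common
ancestors". -/
def LcdReduced.Realize {Λ : Type} {d k : ℕ} {M : Type} (P : M → M → Prop)
    (L : Λ → M → Prop) : LcdReduced Λ d k → (Fin k → M) → Prop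
  | .label c i, v => L c (v i)
  | .lcd j i i', v =>
      {u | ancestorRel P u (v i) ∧ ancestorRel P u (v i')}.ncard = (j : ℕ)
  | .not φ, v => ¬ LcdReduced.Realize P L φ v
  | .and φ ψ, v => LcdReduced.Realize P L φ v ∧ LcdReduced.Realize P L ψ v
  | .or φ ψ, v => LcdReduced.Realize P L φ v ∨ LcdReduced.Realize P L ψ v

/-!
Write `lcd x z` for the number of common ancestors of `x` and `z`. It is an ultrametric similarity:
it is symmetric and `lcd x z ≥ min (lcd x y) (lcd y z)`. Let `y` satisfy `ψ` together with the tuple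
`x_1, …, x_k`, let `x_j` maximize `l = lcd x_j y`, and let `τ` be the set of atomic facts about `y`
alone. Any node `z` satisfying the same facts `τ`, with `lcd x_j z ≥ l` and `lcd x_i z ≤ l` for all
`i`, has `lcd x_i z = lcd x_i y` for all `i`, so it can replace `y`. The nodes satisfying `τ` with
`lcd x_j · ≥ l` depend only on the subtree at depth `l` that contains `x_j`, and by the pigeonhole
principle `k + 1` of them, chosen independently of the tuple, always include a suitable `z`.

The new labels of a node record its `lcd` with the representatives chosen for its own subtrees. For
`x_i` in the subtree of `x_j`, this yields `lcd x_i z`; for all other `x_i`,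
`lcd x_i z = lcd x_i x_j`.
-/

section Representatives

variable {M : Type*} {r : M → M → Prop} [Std.Symm r] {Y : Set M}

theorem exists_separated_or_covering (hY : Y.Nonempty) (n : ℕ) :
    ∃ w : Fin n → M, (∀ i, w i ∈ Y) ∧
      ((Pairwise fun i j => ¬ r (w i) (w j)) ∨ ∀ y ∈ Y, ∃ i, r (w i) y) := by
  induction n with
  | zero => exact ⟨Fin.elim0, fun i => i.elim0, .inl fun i => i.elim0⟩
  | succ n ih =>
    obtain ⟨w, hwY, hw⟩ := ih
    by_cases hcover : ∀ y ∈ Y, ∃ i, r (w i) y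
    · obtain ⟨y₀, hy₀⟩ := hY
      refine ⟨Fin.cons y₀ w, Fin.cases hy₀ hwY, .inr fun y hy => ?_⟩
      obtain ⟨i, hi⟩ := hcover y hy
      exact ⟨i.succ, hi⟩
    · have hsep := hw.resolve_right hcover
      push Not at hcover
      obtain ⟨y, hy, hfar⟩ := hcover
      refine ⟨Fin.cons y w, Fin.cases hy hwY, .inl fun i j => ?_⟩
      cases i using Fin.cases <;> cases j using Fin.cases
      · exact fun h => (h rfl).elim
      · exact fun _ h => hfar _ (symm h)
      · exact fun _ => hfar _
      · exact fun h => hsep (ne_of_apply_ne Fin.succ h)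

theorem exists_representatives [IsTrans M r] (hY : Y.Nonempty) (k : ℕ) :
    ∃ w : Fin (k + 1) → M, (∀ i, w i ∈ Y) ∧
      ∀ y ∈ Y, ∀ v : Fin k → M, (∀ j, ¬ r y (v j)) → ∃ i, ∀ j, ¬ r (w i) (v j) := by
  obtain ⟨w, hwY, hsep | hcover⟩ := exists_separated_or_covering (r := r) hY (k + 1)
  · refine ⟨w, hwY, fun _ _ v _ => ?_⟩
    by_contra! hnear
    choose f hf using hnear
    obtain ⟨a, b, hab, hfab⟩ := Fintype.exists_ne_map_eq_of_card_lt f (by simp)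
    exact hsep hab (_root_.trans (hf a) (hfab ▸ symm (hf b)))
  · refine ⟨w, hwY, fun y hy v hv => ?_⟩
    obtain ⟨i, hi⟩ := hcover y hy
    exact ⟨i, fun j hj => hv j (_root_.trans (symm hi) hj)⟩

end Representatives

/-- The number of common ancestors of `x` and `y`, i.e. the depth of their least common ancestor;
it is `0` if they lie in different trees. The atoms `LcdReduced.lcd` speak about this number. -/
noncomputable def lcdDepth {M : Type} (P : M → M → Prop) (x y : M) : ℕ :=
  {u | ancestorRel P u x ∧ ancestorRel P u y}.ncard

/-- The set of atomic facts about a single node `y`: its labels `c` as `Sum.inl c`, and its depth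
`m` as `Sum.inr m`. -/
def unaryType {Λ M : Type} (d : ℕ) (P : M → M → Prop) (L : Λ → M → Prop) (y : M) :
    Set (Λ ⊕ Fin (d + 1)) :=
  {a | a.elim (fun c => L c y) fun m : Fin (d + 1) => lcdDepth P y y = m}

/-- The nodes of unary type `τ` that have at least `l` common ancestors with `x`. -/
def candidates {Λ M : Type} {d : ℕ} (P : M → M → Prop) (L : Λ → M → Prop) (l : ℕ)
    (τ : Set (Λ ⊕ Fin (d + 1))) (x : M) : Set M :=
  {y | l ≤ lcdDepth P x y ∧ unaryType d P L y = τ}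

theorem ancestorRel_total {M : Type} {P : M → M → Prop} (hP : ∀ x y z, P x z → P y z → x = y)
    {u t y : M} (hu : ancestorRel P u y) (ht : ancestorRel P t y) :
    ancestorRel P t u ∨ ancestorRel P u t :=
  Relation.ReflTransGen.total_of_right_unique (fun a b c hb hc => hP b c a hb hc) hu ht

theorem lcdDepth_comm {M : Type} (P : M → M → Prop) (x y : M) :
    lcdDepth P x y = lcdDepth P y x := by
  simp only [lcdDepth, and_comm]

namespace IsForestParentDepthLE

variable {Λ M : Type} {P : M → M → Prop} {d k : ℕ} {x y z : M}

theorem lcdDepth_le (hP : IsForestParentDepthLE P d) (x y : M) : lcdDepth P x y ≤ d :=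
  (Set.ncard_le_ncard (fun _ hu => hu.1) (hP.2.2 x).1).trans (hP.2.2 x).2

theorem min_lcdDepth_le (hP : IsForestParentDepthLE P d) (x y z : M) :
    min (lcdDepth P x y) (lcdDepth P y z) ≤ lcdDepth P x z := by
  have hfin : {u | ancestorRel P u x ∧ ancestorRel P u z}.Finite :=
    (hP.2.2 x).1.subset fun _ hu => hu.1
  by_cases hxy : ∀ u, ancestorRel P u x → ancestorRel P u y → ancestorRel P u z
  · exact min_le_of_left_le (Set.ncard_le_ncard (fun u hu => ⟨hu.1, hxy u hu.1 hu.2⟩) hfin)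
  · push Not at hxy
    obtain ⟨u, hux, huy, huz⟩ := hxy
    refine min_le_of_right_le (Set.ncard_le_ncard (fun t ⟨hty, htz⟩ => ⟨?_, htz⟩) hfin)
    rcases ancestorRel_total hP.1 huy hty with htu | hut
    · exact hux.trans htu
    · exact absurd (htz.trans hut) huz

theorem lcdDepth_eq_of_le (hP : IsForestParentDepthLE P d)
    (hy : lcdDepth P x y ≤ lcdDepth P y z) (hz : lcdDepth P x z ≤ lcdDepth P y z) :
    lcdDepth P x y = lcdDepth P x z :=
  le_antisymm ((le_min le_rfl hy).trans (hP.min_lcdDepth_le x y z))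
    ((le_min le_rfl (lcdDepth_comm P y z ▸ hz)).trans (hP.min_lcdDepth_le x z y))

theorem lcdDepth_eq_of_lt (hP : IsForestParentDepthLE P d)
    (h : lcdDepth P x y < lcdDepth P y z) : lcdDepth P x z = lcdDepth P x y := by
  have := hP.min_lcdDepth_le x y z
  have := hP.min_lcdDepth_le x z y
  rw [lcdDepth_comm P z y] at this
  omega

theorem candidates_eq_of_le (hP : IsForestParentDepthLE P d) (L : Λ → M → Prop) {l : ℕ}
    (τ : Set (Λ ⊕ Fin (d + 1))) (h : l ≤ lcdDepth P x y) :
    candidates P L l τ x = candidates P L l τ y := by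
  have hyx : l ≤ lcdDepth P y x := lcdDepth_comm P x y ▸ h
  ext t
  exact and_congr_left fun _ => ⟨fun hxt => (le_min hyx hxt).trans (hP.min_lcdDepth_le y x t),
    fun hyt => (le_min h hyt).trans (hP.min_lcdDepth_le x y t)⟩

theorem exists_lcdDepth_representatives (hP : IsForestParentDepthLE P d) (k l : ℕ) {Y : Set M}
    (hY : Y.Nonempty) :
    ∃ w : Fin (k + 1) → M, (∀ i, w i ∈ Y) ∧ ∀ y ∈ Y, ∀ v : Fin k → M,
      (∀ j, lcdDepth P (v j) y ≤ l) → ∃ i, ∀ j, lcdDepth P (v j) (w i) ≤ l := by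
  let r : M → M → Prop := fun x y => l < lcdDepth P y x
  have : Std.Symm r := ⟨fun x y h => (lcdDepth_comm P y x ▸ h : l < lcdDepth P x y)⟩
  have : IsTrans M r :=
    ⟨fun x y z hxy hyz => (lt_min hyz hxy).trans_le (hP.min_lcdDepth_le z y x)⟩
  simpa only [r, not_lt] using exists_representatives (r := r) hY k

/-- A choice of `k + 1` elements of `Y` such that every `k`-tuple having at most `l` common
ancestors with some element of `Y` has at most `l` with one of the chosen elements. -/
noncomputable def representative (hP : IsForestParentDepthLE P d) (k l : ℕ) {Y : Set M}
    (hY : Y.Nonempty) : Fin (k + 1) → M :=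
  (hP.exists_lcdDepth_representatives k l hY).choose

theorem representative_mem (hP : IsForestParentDepthLE P d) (k l : ℕ) {Y : Set M}
    (hY : Y.Nonempty) (i : Fin (k + 1)) : hP.representative k l hY i ∈ Y :=
  (hP.exists_lcdDepth_representatives k l hY).choose_spec.1 i

theorem exists_lcdDepth_representative_le (hP : IsForestParentDepthLE P d) {l : ℕ} {Y : Set M}
    (hy : y ∈ Y) {v : Fin k → M} (hv : ∀ j, lcdDepth P (v j) y ≤ l) :
    ∃ i, ∀ j, lcdDepth P (v j) (hP.representative k l ⟨y, hy⟩ i) ≤ l :=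
  (hP.exists_lcdDepth_representatives k l ⟨y, hy⟩).choose_spec.2 y hy v hv

theorem exists_representative_lcdDepth_eq [NeZero k] (hP : IsForestParentDepthLE P d)
    (L : Λ → M → Prop) (v : Fin k → M) (y : M) :
    ∃ (j₀ : Fin k) (l : Fin (d + 1)) (i : Fin (k + 1))
      (hne : (candidates P L l (unaryType d P L y) (v j₀)).Nonempty),
      lcdDepth P (v j₀) y = l ∧
        ∀ j, lcdDepth P (v j) (hP.representative k l hne i) = lcdDepth P (v j) y := by
  obtain ⟨j₀, hmax⟩ := Finite.exists_max fun j => lcdDepth P (v j) y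
  let l : Fin (d + 1) := ⟨lcdDepth P (v j₀) y, Nat.lt_succ_of_le (hP.lcdDepth_le _ _)⟩
  have hy : y ∈ candidates P L l (unaryType d P L y) (v j₀) := ⟨le_rfl, rfl⟩
  obtain ⟨i, hi⟩ := hP.exists_lcdDepth_representative_le hy hmax
  refine ⟨j₀, l, i, ⟨y, hy⟩, rfl, fun j => ?_⟩
  set z := hP.representative k l ⟨y, hy⟩ i
  have hj₀z : l ≤ lcdDepth P (v j₀) z := (hP.representative_mem k l ⟨y, hy⟩ i).1
  have hzy : l ≤ lcdDepth P z y :=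
    (le_min (lcdDepth_comm P _ z ▸ hj₀z) le_rfl).trans (hP.min_lcdDepth_le z (v j₀) y)
  exact hP.lcdDepth_eq_of_le ((hi j).trans hzy) ((hmax j).trans hzy)

end IsForestParentDepthLE

/-- Names of the additional labels. The label `(l, τ, i, m)` marks the nodes that have exactly `m`
common ancestors with the `i`-th representative of their candidates for `l` and `τ`. -/
abbrev WitnessLabel (Λ : Type) (d k : ℕ) : Type :=
  Fin (d + 1) × Set (Λ ⊕ Fin (d + 1)) × Fin (k + 1) × Fin (d + 1)

/-- The interpretation of the additional labels in a forest; no label holds at a node that has no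
candidates. -/
def witnessLabeling {Λ M : Type} {d k : ℕ} {P : M → M → Prop} (hP : IsForestParentDepthLE P d)
    (L : Λ → M → Prop) : WitnessLabel Λ d k → M → Prop
  | (l, τ, i, m), x => ∃ h : (candidates P L l τ x).Nonempty,
      lcdDepth P x (hP.representative k l h i) = m

namespace LcdReduced

variable {Λ M : Type} {d k : ℕ} {P : M → M → Prop} {L : Λ → M → Prop} {v : Fin k → M}

theorem realize_lcd {m : Fin (d + 1)} {i j : Fin k} :
    (lcd m i j).Realize P L v ↔ lcdDepth P (v i) (v j) = m :=
  Iff.rfl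

variable [NeZero k]

/-- The constant formula with truth value `p`. It needs a variable, since every atom does. -/
noncomputable def const (p : Prop) : LcdReduced Λ d k :=
  open Classical in
  if p then .or (.lcd 0 0 0) (.not (.lcd 0 0 0)) else .and (.lcd 0 0 0) (.not (.lcd 0 0 0))

theorem realize_const (p : Prop) : (const p : LcdReduced Λ d k).Realize P L v ↔ p := by
  by_cases hp : p <;> simp [const, hp, Realize, em]

/-- The disjunction of a finite family of formulas. -/
noncomputable def iSup {ι : Type} [Finite ι] (f : ι → LcdReduced Λ d k) : LcdReduced Λ d k :=
  let _ := Fintype.ofFinite ι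
  ((Finset.univ : Finset ι).toList.map f).foldr .or (const False)

theorem realize_foldr_or (l : List (LcdReduced Λ d k)) :
    (l.foldr .or (const False)).Realize P L v ↔ ∃ φ ∈ l, φ.Realize P L v := by
  induction l with
  | nil => simp [realize_const]
  | cons φ l ih => simp [Realize, ih]

theorem realize_iSup {ι : Type} [Finite ι] (f : ι → LcdReduced Λ d k) :
    (iSup f).Realize P L v ↔ ∃ i, (f i).Realize P L v := by
  simp [iSup, realize_foldr_or]

/-- The formula saying that `x_i` and `x_j` have at least `l` common ancestors. -/
noncomputable def lcdGE (l : Fin (d + 1)) (i j : Fin k) : LcdReduced Λ d k :=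
  iSup fun m : Set.Ici l => .lcd m i j

theorem realize_lcdGE (hP : IsForestParentDepthLE P d) {l : Fin (d + 1)} {i j : Fin k} :
    (lcdGE l i j).Realize P L v ↔ l ≤ lcdDepth P (v i) (v j) := by
  simp only [lcdGE, realize_iSup, realize_lcd]
  constructor
  · rintro ⟨⟨m, hm⟩, h⟩
    exact h ▸ hm
  · exact fun h => ⟨⟨⟨_, Nat.lt_succ_of_le (hP.lcdDepth_le _ _)⟩, h⟩, rfl⟩

/-- The formula saying that `x_j` has exactly `m` common ancestors with the `i`-th representative of
the candidates of `x_{j₀}` for `l` and `τ`, provided that there are such candidates. -/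
noncomputable def lcdWitness (l : Fin (d + 1)) (τ : Set (Λ ⊕ Fin (d + 1))) (i : Fin (k + 1))
    (j₀ : Fin k) (m : Fin (d + 1)) (j : Fin k) : LcdReduced (Λ ⊕ WitnessLabel Λ d k) d k :=
  if m < l then .lcd m j j₀ else .and (lcdGE l j j₀) (.label (.inr (l, τ, i, m)) j)

theorem realize_lcdWitness (hP : IsForestParentDepthLE P d) {l m : Fin (d + 1)}
    {τ : Set (Λ ⊕ Fin (d + 1))} {i : Fin (k + 1)} {j₀ j : Fin k}
    (hne : (candidates P L l τ (v j₀)).Nonempty) :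
    (lcdWitness l τ i j₀ m j).Realize P (Sum.elim L (witnessLabeling hP L)) v ↔
      lcdDepth P (v j) (hP.representative k l hne i) = m := by
  set z := hP.representative k l hne i with hz
  have hj₀z : l ≤ lcdDepth P (v j₀) z := (hP.representative_mem k l hne i).1
  unfold lcdWitness
  split_ifs with hml
  · rw [realize_lcd]
    constructor
    · intro h
      rw [hP.lcdDepth_eq_of_lt (y := v j₀) (by omega), h]
    · intro h
      rw [lcdDepth_comm] at hj₀z
      rw [hP.lcdDepth_eq_of_lt (y := z) (by omega), h]
  · have hlabel (h : l ≤ lcdDepth P (v j) (v j₀)) :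
        witnessLabeling hP L (l, τ, i, m) (v j) ↔ lcdDepth P (v j) z = m := by
      simp only [witnessLabeling, hP.candidates_eq_of_le L τ h, hne, exists_true_left, hz]
    simp only [Realize, realize_lcdGE hP]
    refine (and_congr_right hlabel).trans (and_iff_right_of_imp fun h => ?_)
    have := hP.min_lcdDepth_le (v j) z (v j₀)
    rw [lcdDepth_comm P z] at this
    omega

/-- Eliminates the last variable `y` from a formula: atoms about `y` alone are decided by the unary
type `τ`, and `χ m j` replaces the atom `lcd m` between `x_j` and `y`. -/
noncomputable def substLast {Ω : Type} (τ : Set (Λ ⊕ Fin (d + 1)))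
    (χ : Fin (d + 1) → Fin k → LcdReduced (Λ ⊕ Ω) d k) :
    LcdReduced Λ d (k + 1) → LcdReduced (Λ ⊕ Ω) d k
  | .label c a => a.lastCases (const (.inl c ∈ τ)) (.label (.inl c))
  | .lcd m a b =>
      a.lastCases (b.lastCases (const (.inr m ∈ τ)) (χ m)) fun j => b.lastCases (χ m j) (.lcd m j)
  | .not φ => .not (φ.substLast τ χ)
  | .and φ ψ => .and (φ.substLast τ χ) (ψ.substLast τ χ)
  | .or φ ψ => .or (φ.substLast τ χ) (ψ.substLast τ χ)

theorem realize_substLast {Ω : Type} {W : Ω → M → Prop}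
    {τ : Set (Λ ⊕ Fin (d + 1))} {χ : Fin (d + 1) → Fin k → LcdReduced (Λ ⊕ Ω) d k} {y : M}
    (hτ : unaryType d P L y = τ)
    (hχ : ∀ m j, (χ m j).Realize P (Sum.elim L W) v ↔ lcdDepth P (v j) y = m)
    (ψ : LcdReduced Λ d (k + 1)) :
    (ψ.substLast τ χ).Realize P (Sum.elim L W) v ↔
      ψ.Realize P L (Fin.snoc v y) := by
  subst hτ
  induction ψ with
  | label c a =>
    cases a using Fin.lastCases <;> simp [substLast, Realize, realize_const, unaryType]
  | lcd m a b =>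
    cases a using Fin.lastCases <;> cases b using Fin.lastCases <;>
      simp [substLast, realize_lcd, realize_const, unaryType, hχ, lcdDepth_comm P y]
  | not φ ih => simp only [substLast, Realize, ih]
  | and φ ψ ihφ ihψ => simp only [substLast, Realize, ihφ, ihψ]
  | or φ ψ ihφ ihψ => simp only [substLast, Realize, ihφ, ihψ]

/-- The formula saying that, for some `x_{j₀}`, `l` and `τ`, one of the representatives of the
candidates of `x_{j₀}` satisfies `ψ` as value of the last variable and has exactly `l` common
ancestors with `x_{j₀}`. -/
noncomputable def elimExists [Finite Λ] (ψ : LcdReduced Λ d (k + 1)) :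
    LcdReduced (Λ ⊕ WitnessLabel Λ d k) d k :=
  iSup fun ((j₀, l, τ, i) : Fin k × Fin (d + 1) × Set (Λ ⊕ Fin (d + 1)) × Fin (k + 1)) =>
    .and (.label (.inr (l, τ, i, l)) j₀) (ψ.substLast τ (lcdWitness l τ i j₀))

theorem realize_elimExists [Finite Λ] (hP : IsForestParentDepthLE P d)
    (ψ : LcdReduced Λ d (k + 1)) :
    ψ.elimExists.Realize P (Sum.elim L (witnessLabeling hP L)) v ↔
      ∃ y, ψ.Realize P L (Fin.snoc v y) := by
  simp only [elimExists, realize_iSup, Prod.exists, Realize, Sum.elim_inr]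
  constructor
  · rintro ⟨j₀, l, τ, i, ⟨hne, -⟩, hψ⟩
    have hτ := (hP.representative_mem k l hne i).2
    exact ⟨_, (realize_substLast hτ (fun _ _ => realize_lcdWitness hP hne) ψ).1 hψ⟩
  · rintro ⟨y, hψ⟩
    obtain ⟨j₀, l, i, hne, hl, hz⟩ := hP.exists_representative_lcdDepth_eq L v y
    refine ⟨j₀, l, unaryType d P L y, i, ⟨hne, (hz j₀).trans hl⟩, ?_⟩
    exact (realize_substLast rfl (fun m j => by rw [realize_lcdWitness hP hne, hz]) ψ).2 hψ

end LcdReduced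

theorem stmt17_general (Λ : Type) [Finite Λ] (d k : ℕ) (hk : 1 ≤ k)
    (ψ : LcdReduced Λ d (k + 1)) :
    ∃ (Λ' : Type) (_ : Fintype Λ') (φ' : LcdReduced Λ' d k),
      ∀ (M : Type) (P : M → M → Prop) (L : Λ → M → Prop),
        IsForestParentDepthLE P d →
          ∃ L' : Λ' → M → Prop,
            ∀ v : Fin k → M,
              (φ'.Realize P L' v ↔ ∃ y : M, ψ.Realize P L (Fin.snoc v y)) :=
  have : NeZero k := ⟨Nat.one_le_iff_ne_zero.1 hk⟩
  ⟨Λ ⊕ WitnessLabel Λ d k, Fintype.ofFinite _, ψ.elimExists, fun _ _ L hP =>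
    ⟨Sum.elim L (witnessLabeling hP L), fun _ => LcdReduced.realize_elimExists hP ψ⟩⟩

/-- Quantifier elimination on labeled forests of bounded depth: for `k ≥ 1` and an
lcd-reduced formula `ψ(x_1,…,x_k,y)` over `{parent} ∪ Λ`, there are a finite label set `Λ'`
and an lcd-reduced formula `φ'(x_1,…,x_k)` over `{parent} ∪ Λ'` such that every `Λ`-labeled
forest `𝕋` of depth at most `d` (universe `M`, parent relation `P`, labeling `L`) admits a
`Λ'`-relabeling `𝕊` (same universe, same parent relation, new labeling `L'`) with
`(∃y ψ)(𝕋) = φ'(𝕊)`: a `k`-tuple satisfies `∃y ψ` in `𝕋` iff it satisfies `φ'` in `𝕊`. -/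
theorem stmt17 (Λ : Type) [Fintype Λ] (d k : ℕ) (hk : 1 ≤ k)
    (ψ : LcdReduced Λ d (k + 1)) :
    ∃ (Λ' : Type) (_ : Fintype Λ') (φ' : LcdReduced Λ' d k),
      ∀ (M : Type) [Finite M] (P : M → M → Prop) (L : Λ → M → Prop),
        IsForestParentDepthLE P d →
          ∃ L' : Λ' → M → Prop,
            ∀ v : Fin k → M,
              (φ'.Realize P L' v ↔ ∃ y : M, ψ.Realize P L (Fin.snoc v y)) :=
  let ⟨Λ', hΛ', φ', hφ'⟩ := stmt17_general Λ d k hk ψ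
  ⟨Λ', hΛ', φ', fun M _ => hφ' M⟩
end
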